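/- arXiv:1901.11503 — 2 statements merged into one kernel-verified Lean document; each statement's English description precedes it below -/
import Mathlib

section
/- Consider online linear regression with partial information over T rounds: before the interaction, nature fixes feature vectors s_1,...,s_T in R^b with ||s_i|| <= C_s and targets a_1,...,a_T in R with |a_i| <= C_a, and the round-i loss is c_i(theta) = (theta^T s_i - a_i)^2. Run the random-search-in-action-space algorithm: initialize theta_1 in Theta; at round i sample e_i uniformly from {-1,+1} (independently across rounds), predict hat{a}_i = theta_i^T s_i + delta*e_i, observe only the scalar loss ell_i = (hat{a}_i - a_i)^2, set theta_{i+1}' = theta_i - alpha*(ell_i*e_i/delta)*s_i, and let theta_{i+1} be the Euclidean projection of theta_{i+1}' onto Theta. Then with step size alpha = C_theta*delta/((C^2+1)*C_s*sqrt(T)) and perturbation delta = T^{-1/4}*sqrt(C_theta*(C^2+1)*C_s/(2C)), there is a constant kappa > 0 depending only on C_theta, C_s, C_a and independent of both the feature dimension b and T, such that the expected average regret satisfies (1/T)*( E[sum_{i=1}^T c_i(theta_i)] - min_{theta* in Theta} sum_{i=1}^T c_i(theta*) ) <= kappa * T^{-1/4}. -/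
/-! The algorithm is projected stochastic gradient descent with an exactly unbiased gradient.
Since the loss is quadratic, the symmetric difference quotient
`((y + δ - a)² - (y - δ - a)²) / (2δ)` equals the derivative `2 (y - a)`. The iterate `θ i` depends
only on the signs drawn before round `i`, because Euclidean projection onto a convex set is unique.
Flipping the `i`-th sign therefore preserves both the product measure and `θ i`, and averaging over
this flip gives `E[ℓᵢ eᵢ / δ · ⟪θᵢ - θ*, sᵢ⟫] = E[2 (⟪θᵢ, sᵢ⟫ - aᵢ) ⟪θᵢ - θ*, sᵢ⟫]`
(`integral_sign_estimator`), which dominates `E[cᵢ(θᵢ)] - cᵢ(θ*)` by convexity of the square.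

Projection does not increase the distance to `θ* ∈ Θ`, so each round lowers `E‖θᵢ - θ*‖²` by at least
`2α (E[cᵢ(θᵢ)] - cᵢ(θ*))`, up to the second-order term `(α C Cs / δ)²` (`round_estimate`).
Telescoping gives `2α · regret ≤ 4 Cθ² + T (α C Cs / δ)²`, and with the prescribed
`α` and `δ` the right-hand side divided by `2αT` is a constant times `T ^ (-1/4)`.
-/

open MeasureTheory Metric
open scoped RealInnerProductSpace ENNReal

/-- The uniform probability measure on the two-point set `{-1, +1} ⊆ ℝ`. -/
noncomputable def uniformSign : Measure ℝ :=
  (2: ℝ≥0∞)⁻¹ • Measure.dirac (-1 : ℝ) + (2 : ℝ≥0∞)⁻¹ • Measure.dirac (1 : ℝ)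

/-- `y` is the Euclidean projection of `x` onto the set `Θ`. -/
def IsProjection {F : Type*} [NormedAddCommGroup F] (Θ : Set F) (x y : F) : Prop :=
  y ∈ Θ ∧ ∀ z ∈ Θ, ‖y - x‖ ≤ ‖z - x‖

/-- The variational inequality characterising the projection onto a convex set. -/
lemma IsProjection.inner_le_zero {F : Type*} [NormedAddCommGroup F] [InnerProductSpace ℝ F]
    {Θ : Set F} (hconv : Convex ℝ Θ) {x y : F} (h : IsProjection Θ x y) {z : F} (hz : z ∈ Θ) :
    ⟪x - y, z - y⟫ ≤ 0 := by
  refine (norm_eq_iInf_iff_real_inner_le_zero hconv h.1).1 ?_ z hz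
  have : Nonempty Θ := ⟨⟨y, h.1⟩⟩
  apply le_antisymm
  · refine le_ciInf fun w => ?_
    rw [norm_sub_rev x y, norm_sub_rev x]
    exact h.2 w w.2
  · exact ciInf_le (f := fun w : Θ => ‖x - w‖) ⟨0, by rintro _ ⟨w, rfl⟩; exact norm_nonneg _⟩
      ⟨y, h.1⟩

lemma IsProjection.unique {F : Type*} [NormedAddCommGroup F] [InnerProductSpace ℝ F]
    {Θ : Set F} (hconv : Convex ℝ Θ) {x y y' : F} (h : IsProjection Θ x y)
    (h' : IsProjection Θ x y') : y = y' := by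
  have h1 := h.inner_le_zero hconv h'.1
  have h2 := h'.inner_le_zero hconv h.1
  have h3 : ⟪y' - y, y' - y⟫ = ⟪x - y, y' - y⟫ + ⟪x - y', y - y'⟫ := by
    simp only [inner_sub_left, inner_sub_right, real_inner_comm]
    ring
  have h4 : ⟪y' - y, y' - y⟫ = 0 := le_antisymm (by linarith) real_inner_self_nonneg
  exact (sub_eq_zero.1 (inner_self_eq_zero.1 h4)).symm

lemma IsProjection.norm_sub_sq_le {F : Type*} [NormedAddCommGroup F] [InnerProductSpace ℝ F]
    {Θ : Set F} (hconv : Convex ℝ Θ) {x y : F} (h : IsProjection Θ x y) {z : F} (hz : z ∈ Θ) :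
    ‖y - z‖ ^ 2 ≤ ‖x - z‖ ^ 2 := by
  have h1 := h.inner_le_zero hconv hz
  have h2 : x - z = (x - y) - (z - y) := by abel
  rw [h2, norm_sub_sq_real (x - y), norm_sub_rev y z]
  nlinarith [sq_nonneg ‖x - y‖]

instance : IsProbabilityMeasure uniformSign := ⟨by
  simp [uniformSign, ENNReal.inv_two_add_inv_two]⟩

lemma measurePreserving_neg_uniformSign :
    MeasurePreserving (fun x : ℝ => -x) uniformSign uniformSign := by
  refine ⟨measurable_neg, ?_⟩
  rw [uniformSign, Measure.map_add _ _ measurable_neg, Measure.map_smul, Measure.map_smul,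
    Measure.map_dirac' measurable_neg, Measure.map_dirac' measurable_neg, neg_neg, add_comm]

lemma ae_uniformSign : ∀ᵐ x ∂uniformSign, x = 1 ∨ x = -1 := by
  rw [uniformSign, ae_add_measure_iff]
  constructor
  · refine Measure.ae_smul_measure ?_ _
    rw [ae_dirac_eq]
    simp
  · refine Measure.ae_smul_measure ?_ _
    rw [ae_dirac_eq]
    simp

/-- The law of `T` independent uniform signs. -/
noncomputable abbrev signs (T : ℕ) : Measure (Fin T → ℝ) := Measure.pi fun _ : Fin T => uniformSign

lemma ae_signs {T : ℕ} (i : Fin T) : ∀ᵐ ω ∂signs T, ω i = 1 ∨ ω i = -1 :=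
  (measurePreserving_eval (fun _ : Fin T => uniformSign) i).quasiMeasurePreserving.ae ae_uniformSign

/-- Negation of the `i`-th coordinate. -/
def flipSign {T : ℕ} (i : Fin T) (ω : Fin T → ℝ) : Fin T → ℝ := fun j => if j = i then -ω j else ω j

lemma measurePreserving_flipSign {T : ℕ} (i : Fin T) :
    MeasurePreserving (flipSign i) (signs T) (signs T) := by
  have h := measurePreserving_pi (fun _ : Fin T => uniformSign) (fun _ : Fin T => uniformSign)
    (f := fun j x => if j = i then -x else x) (fun j => by
      by_cases hj : j = i
      · simpa [hj] using measurePreserving_neg_uniformSign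
      · simp only [hj, if_false]; exact MeasurePreserving.id uniformSign)
  exact h

/-- Unbiasedness of the two-sided estimator: if the residual `p` and the weight `q` do not depend on
the `i`-th sign, then `(p + δ eᵢ)² eᵢ / δ` can be replaced by `2 p` under the expectation. -/
lemma integral_sign_estimator {T : ℕ} (i : Fin T) {p q : (Fin T → ℝ) → ℝ} {P Q δ : ℝ} (hδ : 0 < δ)
    (hp : Measurable p) (hq : Measurable q) (hpP : ∀ ω, |p ω| ≤ P) (hqQ : ∀ ω, |q ω| ≤ Q)
    (hpi : ∀ ω, p (flipSign i ω) = p ω) (hqi : ∀ ω, q (flipSign i ω) = q ω) :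
    Integrable (fun ω => (p ω + δ * ω i) ^ 2 * ω i / δ * q ω) (signs T) ∧
      ∫ ω, (p ω + δ * ω i) ^ 2 * ω i / δ * q ω ∂signs T = ∫ ω, 2 * p ω * q ω ∂signs T := by
  set G : (Fin T → ℝ) → ℝ := fun ω => (p ω + δ * ω i) ^ 2 * ω i / δ * q ω with hG
  have hi : Measurable fun ω : Fin T → ℝ => ω i := measurable_pi_apply i
  have hGm : Measurable G := by
    rw [hG]; fun_prop
  have hInt : Integrable G (signs T) := by
    refine Integrable.of_bound hGm.aestronglyMeasurable ((P + δ) ^ 2 / δ * Q) ?_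
    filter_upwards [ae_signs i] with ω hω
    have h1 : |ω i| = 1 := by rcases hω with h | h <;> simp [h]
    have h2 : |p ω + δ * ω i| ≤ P + δ := by
      refine (abs_add_le _ _).trans (add_le_add (hpP ω) ?_)
      rw [abs_mul, h1, abs_of_pos hδ, mul_one]
    simp only [hG, Real.norm_eq_abs, abs_mul, abs_div, abs_pow, h1, abs_of_pos hδ, mul_one]
    have := hqQ ω
    gcongr
  have hinv : ∫ ω, G (flipSign i ω) ∂signs T = ∫ ω, G ω ∂signs T := by
    have hmp := measurePreserving_flipSign i
    rw [← integral_map hmp.measurable.aemeasurable (by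
      rw [hmp.map_eq]; exact hGm.aestronglyMeasurable), hmp.map_eq]
  have hIntFlip : Integrable (fun ω => G (flipSign i ω)) (signs T) :=
    (measurePreserving_flipSign i).integrable_comp_of_integrable hInt
  have hsum : ∫ ω, (G ω + G (flipSign i ω)) ∂signs T = ∫ ω, 2 * (2 * p ω * q ω) ∂signs T := by
    refine integral_congr_ae ?_
    filter_upwards [ae_signs i] with ω hω
    have hf : flipSign i ω i = -ω i := by simp [flipSign]
    simp only [hG, hpi, hqi, hf]
    rcases hω with h | h <;> rw [h] <;> field_simp <;> ring
  rw [integral_add hInt hIntFlip, hinv, integral_const_mul] at hsum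
  exact ⟨hInt, by linarith⟩

/-- One step of the descent argument: the expected squared distance to a comparator `z ∈ Θ` after the
update, for an iterate `x` that does not depend on the sign drawn in that round. -/
lemma round_estimate {F : Type*} [NormedAddCommGroup F] [InnerProductSpace ℝ F]
    [SecondCountableTopology F] [MeasurableSpace F] [BorelSpace F]
    {T : ℕ} (i : Fin T) {Cθ Cs C δ α a : ℝ} (hδ : 0 < δ) {Θ : Set F} (hconv : Convex ℝ Θ)
    (hΘ : ∀ θ' ∈ Θ, ‖θ'‖ ≤ Cθ) {s : F} (hs : ‖s‖ ≤ Cs)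
    (hbd : ∀ y : ℝ, |y| ≤ Cθ * Cs + δ → (y - a) ^ 2 ≤ C)
    {x y : (Fin T → ℝ) → F} (hx : Measurable x) (hy : Measurable y) (hxΘ : ∀ ω, x ω ∈ Θ)
    (hxi : ∀ ω, x (flipSign i ω) = x ω)
    (hproj : ∀ ω, IsProjection Θ
      (x ω - (α * ((⟪x ω, s⟫ + δ * ω i - a) ^ 2 * ω i / δ)) • s) (y ω))
    (hα : 0 < α) {z : F} (hz : z ∈ Θ) :
    Integrable (fun ω => (⟪x ω, s⟫ - a) ^ 2) (signs T) ∧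
    ∫ ω, ‖y ω - z‖ ^ 2 ∂signs T + 2 * α * (∫ ω, (⟪x ω, s⟫ - a) ^ 2 ∂signs T - (⟪z, s⟫ - a) ^ 2)
      ≤ ∫ ω, ‖x ω - z‖ ^ 2 ∂signs T + (α * C * Cs / δ) ^ 2 := by
  have hCθ : 0 ≤ Cθ := (norm_nonneg _).trans (hΘ z hz)
  have hinner : ∀ w ∈ Θ, |⟪w, s⟫| ≤ Cθ * Cs := fun w hw =>
    (abs_real_inner_le_norm w s).trans (mul_le_mul (hΘ w hw) hs (norm_nonneg _) hCθ)
  have hdist : ∀ w ∈ Θ, ‖w - z‖ ≤ Cθ + Cθ := fun w hw =>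
    (norm_sub_le _ _).trans (add_le_add (hΘ w hw) (hΘ z hz))
  have hpm : Measurable fun ω => ⟪x ω, s⟫ - a := (hx.inner_const).sub_const a
  have hqm : Measurable fun ω => ⟪x ω, s⟫ - ⟪z, s⟫ := (hx.inner_const).sub_const _
  have hpP : ∀ ω, |⟪x ω, s⟫ - a| ≤ Cθ * Cs + |a| := fun ω =>
    (abs_sub _ _).trans (add_le_add (hinner _ (hxΘ ω)) le_rfl)
  have hqQ : ∀ ω, |⟪x ω, s⟫ - ⟪z, s⟫| ≤ Cθ * Cs + Cθ * Cs := fun ω =>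
    (abs_sub _ _).trans (add_le_add (hinner _ (hxΘ ω)) (hinner _ hz))
  obtain ⟨hGint, hGeq⟩ := integral_sign_estimator i hδ hpm hqm hpP hqQ
    (fun ω => by simp only [hxi]) (fun ω => by simp only [hxi])
  have hcint : Integrable (fun ω => (⟪x ω, s⟫ - a) ^ 2) (signs T) := by
    refine Integrable.of_bound (hpm.pow_const 2).aestronglyMeasurable ((Cθ * Cs + |a|) ^ 2)
      (ae_of_all _ fun ω => ?_)
    rw [norm_pow, Real.norm_eq_abs]
    exact pow_le_pow_left₀ (abs_nonneg _) (hpP ω) 2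
  have hpqint : Integrable (fun ω => 2 * (⟪x ω, s⟫ - a) * (⟪x ω, s⟫ - ⟪z, s⟫)) (signs T) := by
    refine Integrable.of_bound ((hpm.const_mul 2).mul hqm).aestronglyMeasurable
      (2 * (Cθ * Cs + |a|) * (Cθ * Cs + Cθ * Cs)) (ae_of_all _ fun ω => ?_)
    rw [norm_mul, norm_mul, Real.norm_eq_abs, Real.norm_eq_abs, Real.norm_eq_abs, abs_two]
    have h1 := hpP ω
    have h2 := hqQ ω
    have h0 : 0 ≤ Cθ * Cs + |a| := (abs_nonneg _).trans h1
    gcongr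
  have hnint : ∀ w : (Fin T → ℝ) → F, Measurable w → (∀ ω, w ω ∈ Θ) →
      Integrable (fun ω => ‖w ω - z‖ ^ 2) (signs T) := by
    intro w hw hwΘ
    refine Integrable.of_bound ((hw.sub_const z).norm.pow_const 2).aestronglyMeasurable
      ((Cθ + Cθ) ^ 2) (ae_of_all _ fun ω => ?_)
    rw [norm_pow, norm_norm]
    exact pow_le_pow_left₀ (norm_nonneg _) (hdist _ (hwΘ ω)) 2
  refine ⟨hcint, ?_⟩
  have hstep : ∀ᵐ ω ∂signs T, ‖y ω - z‖ ^ 2 ≤ ‖x ω - z‖ ^ 2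
      - 2 * α * ((⟪x ω, s⟫ - a + δ * ω i) ^ 2 * ω i / δ * (⟪x ω, s⟫ - ⟪z, s⟫))
      + (α * C * Cs / δ) ^ 2 := by
    filter_upwards [ae_signs i] with ω hω
    have h1 : |ω i| = 1 := by rcases hω with h | h <;> simp [h]
    have h2 : (⟪x ω, s⟫ + δ * ω i - a) ^ 2 ≤ C := by
      refine hbd _ ((abs_add_le _ _).trans (add_le_add (hinner _ (hxΘ ω)) ?_))
      rw [abs_mul, h1, abs_of_pos hδ, mul_one]
    have h3 := (hproj ω).norm_sub_sq_le hconv hz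
    set g := (⟪x ω, s⟫ + δ * ω i - a) ^ 2 * ω i / δ with hg
    have h4 : (⟪x ω, s⟫ - a + δ * ω i) ^ 2 * ω i / δ = g := by rw [hg]; ring
    have h5 : |g| ≤ C / δ := by
      rw [hg, abs_div, abs_mul, h1, abs_of_pos hδ, mul_one, abs_of_nonneg (sq_nonneg _)]
      gcongr
    have h6 : ‖(α * g) • s‖ ≤ α * C * Cs / δ := by
      rw [norm_smul, Real.norm_eq_abs, abs_mul, abs_of_pos hα]
      calc α * |g| * ‖s‖ ≤ α * (C / δ) * Cs := by
            have := (abs_nonneg g).trans h5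
            gcongr
        _ = α * C * Cs / δ := by ring
    have h7 : ‖(α * g) • s‖ ^ 2 ≤ (α * C * Cs / δ) ^ 2 :=
      pow_le_pow_left₀ (norm_nonneg _) h6 2
    have h8 : x ω - (α * g) • s - z = (x ω - z) - (α * g) • s := by abel
    rw [h8, norm_sub_sq_real (x ω - z), inner_smul_right, inner_sub_left] at h3
    rw [h4]
    linarith
  have hI1 := integral_mono_ae (hnint y hy fun ω => (hproj ω).1)
    (((hnint x hx hxΘ).sub (hGint.const_mul (2 * α))).add (integrable_const _)) hstep
  have hI2 : ∫ ω, ‖y ω - z‖ ^ 2 ∂signs T ≤ ∫ ω, ‖x ω - z‖ ^ 2 ∂signs T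
      - 2 * α * (∫ ω, 2 * (⟪x ω, s⟫ - a) * (⟪x ω, s⟫ - ⟪z, s⟫) ∂signs T)
      + (α * C * Cs / δ) ^ 2 := by
    refine hI1.trans_eq ?_
    rw [integral_add' ((hnint x hx hxΘ).sub (hGint.const_mul (2 * α))) (integrable_const _),
      integral_sub' (hnint x hx hxΘ) (hGint.const_mul (2 * α)), integral_const_mul, hGeq]
    simp
  -- Convexity of the square: `(u - a)² - (v - a)² ≤ 2 (u - a) (u - v)`.
  have hI3 : ∫ ω, (⟪x ω, s⟫ - a) ^ 2 ∂signs T - (⟪z, s⟫ - a) ^ 2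
      ≤ ∫ ω, 2 * (⟪x ω, s⟫ - a) * (⟪x ω, s⟫ - ⟪z, s⟫) ∂signs T := by
    have h := integral_mono (hcint.sub (integrable_const ((⟪z, s⟫ - a) ^ 2))) hpqint (fun ω => by
      simp only [Pi.sub_apply]
      nlinarith [sq_nonneg (⟪x ω, s⟫ - ⟪z, s⟫)])
    simp only [Pi.sub_apply] at h
    rw [integral_sub hcint (integrable_const _)] at h
    simpa using h
  have hI4 := mul_le_mul_of_nonneg_left hI3 (by positivity : 0 ≤ 2 * α)
  linarith

/-- The tuning of `α` and `δ = t⁻¹ K`, with `t = T ^ (1/4)`: the telescoped bound is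
of order `t⁻¹` after normalisation. -/
lemma tuned_bound {Cθ Cs C K t α δ : ℝ} (hCθ : 0 < Cθ) (hCs : 0 < Cs) (hK : 0 < K)
    (ht : 0 < t) (hδ : δ = t⁻¹ * K) (hα : α = Cθ * δ / ((C ^ 2 + 1) * Cs * t ^ 2)) :
    (1 / t ^ 4) * (((Cθ + Cθ) ^ 2 + t ^ 4 * (α * C * Cs / δ) ^ 2) / (2 * α))
      = (2 * Cθ * (C ^ 2 + 1) * Cs + Cθ * C ^ 2 * Cs / (2 * (C ^ 2 + 1))) / K * t⁻¹ := by
  have hC : 0 < C ^ 2 + 1 := by positivity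
  subst hα hδ
  field_simp
  ring

/-- average regret of random search in action space for online linear
regression with partial information.  The algorithm's randomness is a sequence of `T`
i.i.d. uniform signs (product measure); `θ i ω` is the iterate at round `i`, and round
`i` predicts `⟪θ i ω, s i⟫ + δ * e_i`.  The resulting bound is independent of the
feature dimension `b`. -/
theorem action_space_exploration_regret (Cθ Cs Ca C : ℝ)
    (hCθ : 0 < Cθ) (hCs : 0 < Cs) (hCa : 0 ≤ Ca) (hC : 0 < C) :
    ∃ κ > 0, ∀ (b T : ℕ), 1 ≤ b → 1 ≤ T →
      ∀ (s : ℕ → EuclideanSpace ℝ (Fin b)) (a : ℕ → ℝ),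
        (∀ i < T, ‖s i‖ ≤ Cs) → (∀ i < T, |a i| ≤ Ca) →
      ∀ Θ : Set (EuclideanSpace ℝ (Fin b)),
        Θ.Nonempty → IsClosed Θ → Convex ℝ Θ → (∀ θ' ∈ Θ, ‖θ'‖ ≤ Cθ) →
      ∀ δ α : ℝ,
        δ = (T : ℝ) ^ (-(1 : ℝ) / 4) * Real.sqrt (Cθ * (C ^ 2 + 1) * Cs / (2 * C)) →
        α = Cθ * δ / ((C ^ 2 + 1) * Cs * Real.sqrt T) →
        (∀ i < T, ∀ y : ℝ, |y| ≤ Cθ * Cs + δ → (y - a i) ^ 2 ≤ C) →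
        (∀ i < T, ∀ y₁ y₂ : ℝ, |y₁| ≤ Cθ * Cs + δ → |y₂| ≤ Cθ * Cs + δ →
          |(y₁ - a i) ^ 2 - (y₂ - a i) ^ 2| ≤ C * |y₁ - y₂|) →
      ∀ θinit : EuclideanSpace ℝ (Fin b), θinit ∈ Θ →
      ∀ θ : ℕ → (Fin T → ℝ) → EuclideanSpace ℝ (Fin b),
        (∀ i, Measurable (θ i)) →
        (∀ ω, θ 0 ω = θinit) →
        (∀ i, ∀ hi : i < T, ∀ ω, IsProjection Θ
          (θ i ω -
            (α * ((⟪θ i ω, s i⟫ + δ * ω ⟨i, hi⟩ - a i) ^ 2 * ω ⟨i, hi⟩ / δ)) • s i)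
          (θ (i + 1) ω)) →
        (1 / (T : ℝ)) *
            ((∫ ω, ∑ i ∈ Finset.range T, (⟪θ i ω, s i⟫ - a i) ^ 2
                ∂(Measure.pi fun _ : Fin T => uniformSign))
              - ⨅ θstar : Θ, ∑ i ∈ Finset.range T,
                  (⟪(θstar : EuclideanSpace ℝ (Fin b)), s i⟫ - a i) ^ 2)
          ≤ κ * (T : ℝ) ^ (-(1 : ℝ) / 4) := by
  set K := Real.sqrt (Cθ * (C ^ 2 + 1) * Cs / (2 * C)) with hKdef
  have hK : 0 < K := Real.sqrt_pos.2 (by positivity)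
  refine ⟨(2 * Cθ * (C ^ 2 + 1) * Cs + Cθ * C ^ 2 * Cs / (2 * (C ^ 2 + 1))) / K, by positivity, ?_⟩
  intro b T hb hT s a hs ha Θ hne hcl hconv hΘ δ α hδ hα hbd hlip θinit hinit θ hmeas h0 hproj
  have hTpos : (0 : ℝ) < T := by exact_mod_cast hT
  set t : ℝ := (T : ℝ) ^ ((1 : ℝ) / 4) with htdef
  have ht : 0 < t := Real.rpow_pos_of_pos hTpos _
  have htinv : (T : ℝ) ^ (-(1 : ℝ) / 4) = t⁻¹ := by
    rw [htdef, neg_div, Real.rpow_neg hTpos.le]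
  have ht4 : t ^ 4 = T := by
    rw [htdef, ← Real.rpow_natCast, ← Real.rpow_mul hTpos.le]; norm_num
  have ht2 : Real.sqrt T = t ^ 2 := by
    rw [← ht4, show t ^ 4 = (t ^ 2) ^ 2 by ring, Real.sqrt_sq (by positivity)]
  rw [htinv] at hδ ⊢
  rw [ht2] at hα
  have hδpos : 0 < δ := by rw [hδ]; positivity
  have hαpos : 0 < α := by rw [hα]; positivity
  have hmem : ∀ i ≤ T, ∀ ω, θ i ω ∈ Θ := by
    intro i hi ω
    cases i with
    | zero => rw [h0]; exact hinit
    | succ n => exact (hproj n hi ω).1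
  -- The iterate at round `i` is a function of the signs drawn strictly before round `i`.
  have hadapt : ∀ i ≤ T, ∀ ω ω' : Fin T → ℝ, (∀ j : Fin T, (j : ℕ) < i → ω j = ω' j) →
      θ i ω = θ i ω' := by
    intro i
    induction i with
    | zero => intro _ ω ω' _; rw [h0, h0]
    | succ n ih =>
      intro hi ω ω' hω
      have h1 := ih (Nat.le_of_succ_le hi) ω ω' fun j hj => hω j (Nat.lt_succ_of_lt hj)
      have h2 := hω ⟨n, hi⟩ (Nat.lt_succ_self n)
      have h3 := hproj n hi ω
      rw [h1, h2] at h3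
      exact h3.unique hconv (hproj n hi ω')
  have hround := fun (i : ℕ) (hi : i < T) (z : EuclideanSpace ℝ (Fin b)) (hz : z ∈ Θ) =>
    round_estimate (⟨i, hi⟩ : Fin T) hδpos hconv hΘ (hs i hi) (hbd i hi) (hmeas i) (hmeas (i + 1))
      (hmem i hi.le)
      (fun ω => hadapt i hi.le _ _ fun j hj => by
        have : j ≠ ⟨i, hi⟩ := fun h => by simp [h] at hj
        simp [flipSign, this])
      (hproj i hi) hαpos hz
  have htel : ∀ z ∈ Θ, ∀ n ≤ T, ∫ ω, ‖θ n ω - z‖ ^ 2 ∂signs T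
      + 2 * α * ∑ i ∈ Finset.range n,
        (∫ ω, (⟪θ i ω, s i⟫ - a i) ^ 2 ∂signs T - (⟪z, s i⟫ - a i) ^ 2)
      ≤ (Cθ + Cθ) ^ 2 + n * (α * C * Cs / δ) ^ 2 := by
    intro z hz n
    induction n with
    | zero =>
      intro _
      have h : ‖θinit - z‖ ^ 2 ≤ (Cθ + Cθ) ^ 2 := pow_le_pow_left₀ (norm_nonneg _)
        ((norm_sub_le _ _).trans (add_le_add (hΘ _ hinit) (hΘ z hz))) 2
      simpa [h0] using h
    | succ n ih =>
      intro hn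
      have h1 := ih (Nat.le_of_succ_le hn)
      have h2 := (hround n hn z hz).2
      rw [Finset.sum_range_succ]
      push_cast
      linarith
  have hInt : ∀ i ∈ Finset.range T, Integrable (fun ω => (⟪θ i ω, s i⟫ - a i) ^ 2) (signs T) :=
    fun i hi => (hround i (Finset.mem_range.1 hi) θinit hinit).1
  rw [integral_finsetSum _ hInt, ← tuned_bound hCθ hCs hK ht hδ hα, ht4]
  refine mul_le_mul_of_nonneg_left ?_ (by positivity)
  have : Nonempty Θ := hne.to_subtype
  rw [sub_le_comm]
  refine le_ciInf fun z => ?_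
  rw [sub_le_comm, ← Finset.sum_sub_distrib, le_div_iff₀ (by positivity)]
  have h1 := htel z z.2 T le_rfl
  have h2 : 0 ≤ ∫ ω, ‖θ T ω - z‖ ^ 2 ∂signs T := integral_nonneg fun ω => sq_nonneg _
  linarith
end

section
/- Let f : R^d -> R be differentiable, G-Lipschitz, and L-smooth, fix theta_0 in R^d, and let Delta_0 = f(theta_0) - inf_theta f(theta) (assumed finite). Run stochastic gradient descent theta_{i+1} = theta_i - alpha*g_i for T steps with any fixed alpha > 0, where each stochastic gradient g_i satisfies, conditional on the history up to iteration i-1: E_i[g_i] = grad f(theta_i) and E_i[||g_i - grad f(theta_i)||^2] <= V. Then sum_{i=1}^T E||grad f(theta_i)||^2 <= Delta_0/alpha + (L*T*alpha/2)*(V + G^2). -/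
/-!
The proof is the expected descent inequality, telescoped.  Smoothness gives
`f (x - α g) ≤ f x - α ⟪∇f x, g⟫ + (L α² / 2) ‖g‖²` (`le_add_inner_add_sq_of_lipschitz_gradient`).
With `h = ∇f x`, the identity `‖g‖² = ‖g - h‖² + 2 ⟪h, g⟫ - ‖h‖²` leaves only the bounded
quantity `‖h‖²`, the noise `‖g - h‖²` and the cross term `⟪h, g⟫` to be integrated; the cross term
has mean `E ‖h‖²` by the pull-out property of conditional expectation, since `h` is determined by
the history (`integral_inner_eq_of_condExp`).  Hence
`α E ‖∇f(θ i)‖² ≤ E f(θ i) - E f(θ (i+1)) + (L α² / 2) (V + G²)`, and summing over `i < T` leaves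
`f θ₀ - E f(θ T) ≤ Δ₀` on the right.
-/

open MeasureTheory

section Deterministic

variable {E : Type*} [NormedAddCommGroup E] [InnerProductSpace ℝ E] [CompleteSpace E]

theorem norm_gradient_le_of_lipschitz {f : E → ℝ} {G : ℝ} (hG : 0 ≤ G)
    (hdiff : Differentiable ℝ f) (hlip : ∀ x y, |f x - f y| ≤ G * ‖x - y‖) (x : E) :
    ‖gradient f x‖ ≤ G := by
  rw [gradient, LinearIsometryEquiv.norm_map]
  exact (hdiff x).hasFDerivAt.le_of_lip' hG (Filter.Eventually.of_forall fun y => hlip y x)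

/-- The descent lemma: a function with `L`-Lipschitz gradient lies below its quadratic model. -/
theorem le_add_inner_add_sq_of_lipschitz_gradient {f : E → ℝ} {L : ℝ}
    (hdiff : Differentiable ℝ f)
    (hsmooth : ∀ x y, ‖gradient f x - gradient f y‖ ≤ L * ‖x - y‖) (x v : E) :
    f (x + v) ≤ f x + inner ℝ (gradient f x) v + L / 2 * ‖v‖ ^ 2 := by
  -- The gap between `f` and its model, along the segment from `x` to `x + v`, is nonincreasing.
  let ψ : ℝ → ℝ := fun t =>
    f (x + t • v) - t * inner ℝ (gradient f x) v - L / 2 * ‖v‖ ^ 2 * t ^ 2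
  have hψ : ∀ t, HasDerivAt ψ (inner ℝ (gradient f (x + t • v) - gradient f x) v
      - L * ‖v‖ ^ 2 * t) t := by
    intro t
    have h1 : HasDerivAt (fun t : ℝ => x + t • v) v t := by
      simpa using ((hasDerivAt_id t).smul_const v).const_add x
    have h2 := ((hdiff (x + t • v)).hasGradientAt.hasFDerivAt).comp_hasDerivAt t h1
    have h3 := (h2.sub ((hasDerivAt_id t).mul_const (inner ℝ (gradient f x) v))).sub
      (((hasDerivAt_id t).pow 2).const_mul (L / 2 * ‖v‖ ^ 2))
    refine h3.congr_deriv ?_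
    simp [inner_sub_left]
    ring
  have hanti : AntitoneOn ψ (Set.Ici 0) := by
    refine antitoneOn_of_deriv_nonpos (convex_Ici 0)
      (fun t _ => (hψ t).continuousAt.continuousWithinAt)
      (fun t _ => (hψ t).differentiableAt.differentiableWithinAt) fun t ht => ?_
    rw [interior_Ici, Set.mem_Ioi] at ht
    rw [(hψ t).deriv, sub_nonpos]
    calc inner ℝ (gradient f (x + t • v) - gradient f x) v
        ≤ ‖gradient f (x + t • v) - gradient f x‖ * ‖v‖ := real_inner_le_norm _ _
      _ ≤ L * ‖x + t • v - x‖ * ‖v‖ := by gcongr; exact hsmooth _ _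
      _ = L * ‖v‖ ^ 2 * t := by
        rw [add_sub_cancel_left, norm_smul, Real.norm_of_nonneg ht.le]; ring
  have h01 := hanti (Set.mem_Ici.2 le_rfl) (Set.mem_Ici.2 zero_le_one) zero_le_one
  simp only [ψ, one_smul, zero_smul, add_zero] at h01
  linarith

end Deterministic

section Stochastic

variable {E : Type*} [NormedAddCommGroup E] [InnerProductSpace ℝ E]
  {Ω : Type*} {m m0 : MeasurableSpace Ω} {μ : Measure Ω}

theorem integrable_inner_of_bounded {h g : Ω → E} {G : ℝ} (hh : AEStronglyMeasurable h μ)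
    (hb : ∀ ω, ‖h ω‖ ≤ G) (hg : Integrable g μ) :
    Integrable (fun ω => inner ℝ (h ω) (g ω)) μ := by
  refine (hg.norm.const_mul G).mono' (hh.inner hg.aestronglyMeasurable)
    (Filter.Eventually.of_forall fun ω => (norm_inner_le_norm _ _).trans ?_)
  gcongr
  exact hb ω

/-- If `h = E[g | m]` is bounded, then the part `g - h` orthogonal to the history has no
correlation with `h`. -/
theorem integral_inner_eq_of_condExp [CompleteSpace E] [IsFiniteMeasure μ]
    (hm : m ≤ m0) {h g : Ω → E} {G : ℝ}
    (hh : StronglyMeasurable[m] h) (hb : ∀ ω, ‖h ω‖ ≤ G) (hg : Integrable g μ)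
    (hmean : μ[g|m] =ᵐ[μ] h) :
    ∫ ω, inner ℝ (h ω) (g ω) ∂μ = ∫ ω, ‖h ω‖ ^ 2 ∂μ := by
  have hpull := condExp_bilin_of_stronglyMeasurable_left (innerSL ℝ) hh
    (integrable_inner_of_bounded (hh.mono hm).aestronglyMeasurable hb hg) hg
  rw [← integral_condExp hm]
  refine integral_congr_ae ?_
  filter_upwards [hpull, hmean] with ω h1 h2
  rw [h2] at h1
  exact h1.trans (real_inner_self_eq_norm_sq _)

/-- One stochastic gradient step, in expectation. Integrability of `f ∘ θ'` is part of the
conclusion so that the steps can be chained by induction. No sign condition on the coefficient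
`L α² - α` of the cross term is needed, because that term is integrated exactly. -/
theorem expected_descent_step [CompleteSpace E] [IsProbabilityMeasure μ]
    (hm : m ≤ m0) {G L V α : ℝ} (hG : 0 ≤ G) (hL : 0 < L) (hα : 0 < α) {f : E → ℝ}
    (hdiff : Differentiable ℝ f) (hlip : ∀ x y, |f x - f y| ≤ G * ‖x - y‖)
    (hsmooth : ∀ x y, ‖gradient f x - gradient f y‖ ≤ L * ‖x - y‖)
    {θ θ' g : Ω → E} (hupd : ∀ ω, θ' ω = θ ω - α • g ω)
    (hθ : StronglyMeasurable[m] θ) (hfθ : Integrable (fun ω => f (θ ω)) μ)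
    (hg : Integrable g μ)
    (hg2 : Integrable (fun ω => ‖g ω - gradient f (θ ω)‖ ^ 2) μ)
    (hmean : μ[g|m] =ᵐ[μ] fun ω => gradient f (θ ω))
    (hvar : ∀ᵐ ω ∂μ, (μ[fun ω' => ‖g ω' - gradient f (θ ω')‖ ^ 2|m]) ω ≤ V) :
    Integrable (fun ω => f (θ' ω)) μ ∧
      α * ∫ ω, ‖gradient f (θ ω)‖ ^ 2 ∂μ
        ≤ ∫ ω, f (θ ω) ∂μ - ∫ ω, f (θ' ω) ∂μ + L * α ^ 2 / 2 * (V + G ^ 2) := by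
  have hcont : Continuous (gradient f) :=
    (LipschitzWith.of_dist_le_mul (K := L.toNNReal) fun x y => by
      simpa [dist_eq_norm, hL.le] using hsmooth x y).continuous
  have hh : StronglyMeasurable[m] (fun ω => gradient f (θ ω)) := hcont.comp_stronglyMeasurable hθ
  have hb : ∀ ω, ‖gradient f (θ ω)‖ ≤ G := fun ω => norm_gradient_le_of_lipschitz hG hdiff hlip _
  have hb2 : ∀ ω, ‖gradient f (θ ω)‖ ^ 2 ≤ G ^ 2 := fun ω =>
    pow_le_pow_left₀ (norm_nonneg _) (hb ω) 2
  have hinner := integrable_inner_of_bounded (hh.mono hm).aestronglyMeasurable hb hg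
  have hh2 : Integrable (fun ω => ‖gradient f (θ ω)‖ ^ 2) μ :=
    (integrable_const (G ^ 2)).mono' ((hh.mono hm).norm.pow 2).aestronglyMeasurable
      (Filter.Eventually.of_forall fun ω => by simpa using hb2 ω)
  have hθ'meas : AEStronglyMeasurable θ' μ := by
    rw [funext hupd]
    exact (hθ.mono hm).aestronglyMeasurable.sub (hg.aestronglyMeasurable.const_smul α)
  -- The increment of `f` is at most `G α ‖g‖`, which is integrable.
  have hdiffint : Integrable (fun ω => f (θ' ω) - f (θ ω)) μ := by
    refine (hg.norm.const_mul (G * α)).mono'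
      ((hdiff.continuous.comp_aestronglyMeasurable hθ'meas).sub hfθ.aestronglyMeasurable)
      (Filter.Eventually.of_forall fun ω => (hlip _ _).trans (le_of_eq ?_))
    rw [hupd, sub_sub_cancel_left, norm_neg, norm_smul, Real.norm_of_nonneg hα.le, mul_assoc]
  have hfθ' : Integrable (fun ω => f (θ' ω)) μ :=
    (hdiffint.add hfθ).congr (Filter.Eventually.of_forall fun ω => sub_add_cancel _ _)
  refine ⟨hfθ', ?_⟩
  have hpt : ∀ ω, f (θ' ω) ≤ f (θ ω) + (L * α ^ 2 - α) * inner ℝ (gradient f (θ ω)) (g ω)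
      + L * α ^ 2 / 2 * ‖g ω - gradient f (θ ω)‖ ^ 2
      - L * α ^ 2 / 2 * ‖gradient f (θ ω)‖ ^ 2 := by
    intro ω
    have h1 := le_add_inner_add_sq_of_lipschitz_gradient hdiff hsmooth (θ ω) (-(α • g ω))
    rw [← sub_eq_add_neg, ← hupd, inner_neg_right, real_inner_smul_right, norm_neg, norm_smul,
      Real.norm_of_nonneg hα.le] at h1
    -- The hypotheses control the second moment of the noise `g - ∇f`, not that of `g` itself.
    have h2 := norm_sub_sq_real (g ω) (gradient f (θ ω))
    rw [real_inner_comm] at h2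
    rw [h2]
    linarith
  have hvar' : ∫ ω, ‖g ω - gradient f (θ ω)‖ ^ 2 ∂μ ≤ V := by
    rw [← integral_condExp hm]
    simpa using integral_mono_ae integrable_condExp (integrable_const V) hvar
  have hG2 : ∫ ω, ‖gradient f (θ ω)‖ ^ 2 ∂μ ≤ G ^ 2 := by
    simpa using integral_mono hh2 (integrable_const (G ^ 2)) hb2
  have i1 := hinner.const_mul (L * α ^ 2 - α)
  have i2 := hg2.const_mul (L * α ^ 2 / 2)
  have i3 := hh2.const_mul (L * α ^ 2 / 2)
  have hint := integral_mono hfθ' (((hfθ.add i1).add i2).sub i3) hpt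
  rw [integral_sub' ((hfθ.add i1).add i2) i3, integral_add' (hfθ.add i1) i2,
    integral_add' hfθ i1, integral_const_mul, integral_const_mul, integral_const_mul,
    integral_inner_eq_of_condExp hm hh hb hg hmean] at hint
  have hc : 0 ≤ L * α ^ 2 / 2 := by positivity
  have := mul_le_mul_of_nonneg_left (add_le_add hvar' hG2) hc
  linarith

end Stochastic

/-- one-step-size SGD bound.  `ℱ` is the filtration of histories, `g i` is the
stochastic gradient used at step `i` (measurable with respect to `ℱ (i+1)`), and the
conditional mean and variance conditions are expressed with conditional expectations. -/
theorem sgd_sum_gradient_bound (d T : ℕ) (hT : 1 ≤ T)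
    (G L V α : ℝ) (hG : 0 ≤ G) (hL : 0 < L) (hV : 0 < V) (hα : 0 < α)
    (f : EuclideanSpace ℝ (Fin d) → ℝ)
    (hdiff : Differentiable ℝ f)
    (hlip : ∀ x y, |f x - f y| ≤ G * ‖x - y‖)
    (hsmooth : ∀ x y, ‖gradient f x - gradient f y‖ ≤ L * ‖x - y‖)
    (hbdd : BddBelow (Set.range f))
    (θ₀ : EuclideanSpace ℝ (Fin d)) (Δ₀ : ℝ) (hΔ₀ : Δ₀ = f θ₀ - ⨅ θ, f θ)
    (Ω : Type*) (m : MeasurableSpace Ω) (μ : Measure Ω) (hprob : IsProbabilityMeasure μ)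
    (ℱ : Filtration ℕ m)
    (g θ : ℕ → Ω → EuclideanSpace ℝ (Fin d))
    (hθ0 : ∀ ω, θ 0 ω = θ₀)
    (hupd : ∀ i < T, ∀ ω, θ (i + 1) ω = θ i ω - α • g i ω)
    (hθadapt : ∀ i ≤ T, StronglyMeasurable[ℱ i] (θ i))
    (hgadapt : ∀ i < T, StronglyMeasurable[ℱ (i + 1)] (g i))
    (hgint : ∀ i < T, Integrable (g i) μ)
    (hg2int : ∀ i < T, Integrable (fun ω => ‖g i ω - gradient f (θ i ω)‖ ^ 2) μ)
    (hmean : ∀ i < T, μ[g i|ℱ i] =ᵐ[μ] fun ω => gradient f (θ i ω))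
    (hvar : ∀ i < T, ∀ᵐ ω ∂μ,
      (μ[fun ω' => ‖g i ω' - gradient f (θ i ω')‖ ^ 2|ℱ i]) ω ≤ V) :
    ∑ i ∈ Finset.range T, ∫ ω, ‖gradient f (θ i ω)‖ ^ 2 ∂μ
      ≤ Δ₀ / α + (L * T * α / 2) * (V + G ^ 2) := by
  have hstep := fun i (hi : i < T) (hfθ : Integrable (fun ω => f (θ i ω)) μ) =>
    expected_descent_step (ℱ.le i) hG hL hα hdiff hlip hsmooth (hupd i hi) (hθadapt i hi.le) hfθ
      (hgint i hi) (hg2int i hi) (hmean i hi) (hvar i hi)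
  have hfint : ∀ i ≤ T, Integrable (fun ω => f (θ i ω)) μ := by
    intro i
    induction i with
    | zero => intro _; simp [hθ0]
    | succ k ih => intro hk; exact (hstep k hk (ih (Nat.le_of_succ_le hk))).1
  have hsum := Finset.sum_le_sum fun i (hi : i ∈ Finset.range T) =>
    (hstep i (Finset.mem_range.1 hi) (hfint i (Finset.mem_range.1 hi).le)).2
  rw [← Finset.mul_sum, Finset.sum_add_distrib,
    Finset.sum_range_sub' (fun i => ∫ ω, f (θ i ω) ∂μ), Finset.sum_const, Finset.card_range,
    nsmul_eq_mul] at hsum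
  have h0 : ∫ ω, f (θ 0 ω) ∂μ = f θ₀ := by simp [hθ0]
  have hT' : ⨅ x, f x ≤ ∫ ω, f (θ T ω) ∂μ := by
    simpa using integral_mono (integrable_const (⨅ x, f x)) (hfint T le_rfl)
      fun ω => ciInf_le hbdd (θ T ω)
  refine le_of_mul_le_mul_left (hsum.trans ?_) hα
  have hexp : α * (Δ₀ / α + L * T * α / 2 * (V + G ^ 2))
      = Δ₀ + T * (L * α ^ 2 / 2 * (V + G ^ 2)) := by
    field_simp
  rw [hexp, h0, hΔ₀]
  linarith
end
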